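/- (Mix admissibility) In CacLL with cut, the mix rule — from ⊢ (Γ, !^c A⊥) and ⊢ (?^c A, Δ{?^c A}⋯{?^c A}) infer ⊢ (Γ, Δ{}⋯{}) — is derivable, provided C ∈ f(c): each application of mix is equivalent to one application of cut followed by (possibly several) applications of the subexponential contraction rule ?C. -/

import Mathlib

set_option autoImplicit false

namespace NACLL

/-- Structures: binary trees whose leaves are formulas, with an empty structure.
`(∅,Γ)` and `(Γ,∅)` are identified with `Γ` via the smart constructor `comma`. -/
inductive Struct (F : Type) : Type where
  | emp : Struct F
  | leaf : F → Struct F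
  | pair : Struct F → Struct F → Struct F

namespace Struct

/-- Pairing of structures, erasing empty substructures. -/
def comma {F : Type} : Struct F → Struct F → Struct F
  | .emp, Δ => Δ
  | Γ, .emp => Γ
  | Γ, Δ => .pair Γ Δ

def map {F G : Type} (f : F → G) : Struct F → Struct G
  | .emp => .emp
  | .leaf a => .leaf (f a)
  | .pair l r => .pair (map f l) (map f r)

/-- Number of formula leaves of a structure. -/
def nleaves {F : Type} : Struct F → ℕ
  | .emp => 0
  | .leaf _ => 1
  | .pair l r => nleaves l + nleaves r

/-- All formula leaves of a structure satisfy a predicate. -/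
def Forall {F : Type} (p : F → Prop) : Struct F → Prop
  | .emp => True
  | .leaf a => p a
  | .pair l r => Forall p l ∧ Forall p r

end Struct

/-- Structural equivalence: the reflexive, symmetric, transitive closure of
top-level exchange and top-level associativity. -/
inductive StEquiv {F : Type} : Struct F → Struct F → Prop where
  | refl (Γ : Struct F) : StEquiv Γ Γ
  | symm {Γ Δ : Struct F} : StEquiv Γ Δ → StEquiv Δ Γ
  | trans {Γ Δ Θ : Struct F} : StEquiv Γ Δ → StEquiv Δ Θ → StEquiv Γ Θ
  | exch (Γ Δ : Struct F) : StEquiv (Γ.comma Δ) (Δ.comma Γ)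
  | assoc (Γ Δ Θ : Struct F) : StEquiv (Γ.comma (Δ.comma Θ)) ((Γ.comma Δ).comma Θ)

/-- Contexts with one hole. -/
inductive Ctx (F : Type) : Type where
  | hole : Ctx F
  | pairL : Ctx F → Struct F → Ctx F
  | pairR : Struct F → Ctx F → Ctx F

namespace Ctx

/-- Filling the hole of a context with a structure (empty substructures are erased). -/
def fill {F : Type} : Ctx F → Struct F → Struct F
  | .hole, Ξ => Ξ
  | .pairL R Δ, Ξ => (fill R Ξ).comma Δ
  | .pairR Γ R, Ξ => Γ.comma (fill R Ξ)

/-- A context viewed as a structure over `Option F`, the hole being the leaf `none`. -/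
def toStruct {F : Type} : Ctx F → Struct (Option F)
  | .hole => .leaf none
  | .pairL R Δ => (toStruct R).comma (Δ.map some)
  | .pairR Γ R => (Γ.map some).comma (toStruct R)

def size {F : Type} : Ctx F → ℕ
  | .hole => 0
  | .pairL R _ => size R + 2
  | .pairR _ R => size R + 1

/-- The designator. -/
def desi {F : Type} : Ctx F → Struct F
  | .hole => .emp
  | .pairL R Δ => desi (.pairR Δ R)
  | .pairR Γ .hole => Γ
  | .pairR Γ (.pairR Δ P) => desi (.pairR (Γ.comma Δ) P)
  | .pairR Γ (.pairL D Θp) => desi (.pairR (Θp.comma Γ) D)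
termination_by c => size c
decreasing_by all_goals simp [size]

/-- All formula leaves of a context (other than the hole) satisfy a predicate. -/
def Forall {F : Type} (p : F → Prop) : Ctx F → Prop
  | .hole => True
  | .pairL R Δ => Forall p R ∧ Δ.Forall p
  | .pairR Γ R => Γ.Forall p ∧ Forall p R

end Ctx

/-- Structural equivalence of one-hole contexts, treating the hole as a leaf. -/
def CtxEquiv {F : Type} (T X : Ctx F) : Prop := StEquiv T.toStruct X.toStruct

/-- Contexts with two holes (the first hole is the designated one). -/
inductive Ctx2 (F : Type) : Type where
  | splitLR : Ctx F → Ctx F → Ctx2 F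
  | splitRL : Ctx F → Ctx F → Ctx2 F
  | pairL : Ctx2 F → Struct F → Ctx2 F
  | pairR : Struct F → Ctx2 F → Ctx2 F

namespace Ctx2

/-- Filling the first hole of a two-hole context, yielding a one-hole context. -/
def fillFst {F : Type} : Ctx2 F → Struct F → Ctx F
  | .splitLR c1 c2, Δ => .pairR (c1.fill Δ) c2
  | .splitRL c2 c1, Δ => .pairL c2 (c1.fill Δ)
  | .pairL R Γ, Δ => .pairL (fillFst R Δ) Γ
  | .pairR Γ R, Δ => .pairR Γ (fillFst R Δ)

end Ctx2

end NACLL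
namespace NACLL

/-- Structural axioms that a subexponential may license. -/
inductive SubAx : Type where
  | C : SubAx
  | W : SubAx
  | E : SubAx
  | A1 : SubAx
  | A2 : SubAx
deriving DecidableEq

/-- A subexponential signature: a preordered set of indices together with an
upwardly closed assignment of licensed structural axioms. -/
structure Sig (I : Type) where
  le : I → I → Prop
  le_refl : ∀ i, le i i
  le_trans : ∀ {i j k}, le i j → le j k → le i k
  f : I → Set SubAx
  upclosed : ∀ {i j}, le i j → f i ⊆ f j

/-- Formulas of classical non-associative non-commutative multimodal linear logic. -/
inductive CForm (I : Type) : Type where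
  | pos : ℕ → CForm I
  | neg : ℕ → CForm I
  | tensor : CForm I → CForm I → CForm I
  | par : CForm I → CForm I → CForm I
  | one : CForm I
  | bot : CForm I
  | oplus : CForm I → CForm I → CForm I
  | with' : CForm I → CForm I → CForm I
  | zero : CForm I
  | top : CForm I
  | bang : I → CForm I → CForm I
  | quest : I → CForm I → CForm I

namespace CForm

/-- De Morgan dual, pushed to atomic scope (order-reversing on the multiplicatives). -/
def dual {I : Type} : CForm I → CForm I
  | .pos a => .neg a
  | .neg a => .pos a
  | .tensor A B => .par (dual B) (dual A)
  | .par A B => .tensor (dual B) (dual A)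
  | .one => .bot
  | .bot => .one
  | .oplus A B => .with' (dual A) (dual B)
  | .with' A B => .oplus (dual A) (dual B)
  | .zero => .top
  | .top => .zero
  | .bang i A => .quest i (dual A)
  | .quest i A => .bang i (dual A)

/-- The counter ♮ on formulas. -/
def counter {I : Type} : CForm I → ℤ
  | .pos _ => 0
  | .neg _ => 1
  | .tensor A B => counter A + counter B
  | .par A B => counter A + counter B - 1
  | .one => 0
  | .bot => 1
  | .oplus A _ => counter A
  | .with' A _ => counter A
  | .zero => 1
  | .top => 0
  | .bang _ A => counter A
  | .quest _ A => counter A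

end CForm

/-- The counter ♮ extended to structures. -/
def Struct.counter {I : Type} : Struct (CForm I) → ℤ
  | .emp => 0
  | .leaf A => A.counter
  | .pair l r => counter l + counter r

/-- All leaves of a (nonempty) structure are `?ᵏ`-formulas whose label licenses
the given structural axiom. -/
inductive QAll {I : Type} (σ : Sig I) (ax : SubAx) : Struct (CForm I) → Prop where
  | leaf {k : I} {F : CForm I} (h : ax ∈ σ.f k) : QAll σ ax (.leaf (.quest k F))
  | pair {Γ Δ : Struct (CForm I)} : QAll σ ax Γ → QAll σ ax Δ → QAll σ ax (.pair Γ Δ)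

/-- `UpSet σ i Γ Γ'` holds iff `Γ^{↑i}` is defined and equal to `Γ'`:
every leaf of `Γ` is a `?ᵏ`-formula which is kept when `i ⪯ k` and erased when
`i ⋠ k` and `W ∈ f(k)`. -/
inductive UpSet {I : Type} (σ : Sig I) (i : I) : Struct (CForm I) → Struct (CForm I) → Prop where
  | emp : UpSet σ i .emp .emp
  | keep {k : I} {F : CForm I} (h : σ.le i k) :
      UpSet σ i (.leaf (.quest k F)) (.leaf (.quest k F))
  | drop {k : I} {F : CForm I} (h1 : ¬ σ.le i k) (h2 : SubAx.W ∈ σ.f k) :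
      UpSet σ i (.leaf (.quest k F)) .emp
  | pair {Γ Γ' Δ Δ' : Struct (CForm I)} :
      UpSet σ i Γ Γ' → UpSet σ i Δ Δ' → UpSet σ i (.pair Γ Δ) (Γ'.comma Δ')

/-- Structures over `Option F` serve as multi-hole contexts: `none`-leaves are
holes. `fillAll T D` fills every hole with `D` (erasing empty substructures). -/
def fillAll {F : Type} : Struct (Option F) → Struct F → Struct F
  | .emp, _ => .emp
  | .leaf (some a), _ => .leaf a
  | .leaf none, D => D
  | .pair l r, D => (fillAll l D).comma (fillAll r D)

/-- Derivability in the one-sided classical sequent calculus CacLL over the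
signature `σ`.  The Boolean flag indicates whether the cut rule may be used:
`CDer σ false` is cut-free CacLL, `CDer σ true` is CacLL extended with cut. -/
inductive CDer {I : Type} (σ : Sig I) : Bool → Struct (CForm I) → Prop where
  | initP {b : Bool} (a : ℕ) :
      CDer σ b (.pair (.leaf (.pos a)) (.leaf (.neg a)))
  | initN {b : Bool} (a : ℕ) :
      CDer σ b (.pair (.leaf (.neg a)) (.leaf (.pos a)))
  | tensor {b : Bool} {Γ Δ : Struct (CForm I)} {F G : CForm I} :
      CDer σ b (Γ.comma (.leaf G)) → CDer σ b (Δ.comma (.leaf F)) →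
      CDer σ b ((Γ.comma Δ).comma (.leaf (.tensor F G)))
  | par {b : Bool} (R : Ctx (CForm I)) {F G : CForm I} :
      CDer σ b (R.fill (.pair (.leaf F) (.leaf G))) →
      CDer σ b (R.fill (.leaf (.par F G)))
  | oplus₁ {b : Bool} (R : Ctx (CForm I)) {F1 F2 : CForm I} :
      CDer σ b (R.fill (.leaf F1)) → CDer σ b (R.fill (.leaf (.oplus F1 F2)))
  | oplus₂ {b : Bool} (R : Ctx (CForm I)) {F1 F2 : CForm I} :
      CDer σ b (R.fill (.leaf F2)) → CDer σ b (R.fill (.leaf (.oplus F1 F2)))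
  | with' {b : Bool} (R : Ctx (CForm I)) {F1 F2 : CForm I} :
      CDer σ b (R.fill (.leaf F1)) → CDer σ b (R.fill (.leaf F2)) →
      CDer σ b (R.fill (.leaf (.with' F1 F2)))
  | bot {b : Bool} (R : Ctx (CForm I)) :
      CDer σ b (R.fill .emp) → CDer σ b (R.fill (.leaf .bot))
  | one {b : Bool} : CDer σ b (.leaf .one)
  | top {b : Bool} (R : Ctx (CForm I)) : CDer σ b (R.fill (.leaf .top))
  | exch {b : Bool} {Γ Δ : Struct (CForm I)} :
      CDer σ b (Δ.comma Γ) → CDer σ b (Γ.comma Δ)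
  | assoc₁ {b : Bool} {Γ Δ Θ : Struct (CForm I)} :
      CDer σ b (Γ.comma (Δ.comma Θ)) → CDer σ b ((Γ.comma Δ).comma Θ)
  | assoc₂ {b : Bool} {Γ Δ Θ : Struct (CForm I)} :
      CDer σ b ((Γ.comma Δ).comma Θ) → CDer σ b (Γ.comma (Δ.comma Θ))
  | prom {b : Bool} {Γ Γ' : Struct (CForm I)} {i : I} {F : CForm I} :
      UpSet σ i Γ Γ' → CDer σ b (Γ'.comma (.leaf F)) →
      CDer σ b (Γ.comma (.leaf (.bang i F)))
  | der {b : Bool} (R : Ctx (CForm I)) {i : I} {F : CForm I} :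
      CDer σ b (R.fill (.leaf F)) → CDer σ b (R.fill (.leaf (.quest i F)))
  | qA1 {b : Bool} {Δ1 Δ2 Δ3 Γ : Struct (CForm I)} (h : QAll σ .A1 Γ) :
      CDer σ b (((Δ1.comma Δ2).comma Δ3).comma Γ) →
      CDer σ b ((Δ1.comma (Δ2.comma Δ3)).comma Γ)
  | qA2 {b : Bool} {Δ1 Δ2 Δ3 Γ : Struct (CForm I)} (h : QAll σ .A2 Γ) :
      CDer σ b ((Δ1.comma (Δ2.comma Δ3)).comma Γ) →
      CDer σ b (((Δ1.comma Δ2).comma Δ3).comma Γ)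
  | qE {b : Bool} {Δ1 Δ2 Γ : Struct (CForm I)} (h : QAll σ .E Γ) :
      CDer σ b ((Δ2.comma Δ1).comma Γ) → CDer σ b ((Δ1.comma Δ2).comma Γ)
  | qW {b : Bool} (R : Ctx (CForm I)) {Δ : Struct (CForm I)} (h : QAll σ .W Δ) :
      CDer σ b (R.fill .emp) → CDer σ b (R.fill Δ)
  | qC {b : Bool} (R : Ctx2 (CForm I)) {Δ : Struct (CForm I)} (h : QAll σ .C Δ) :
      CDer σ b ((R.fillFst Δ).fill Δ) → CDer σ b ((R.fillFst .emp).fill Δ)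
  | cut {Γ Δ : Struct (CForm I)} {A : CForm I} :
      CDer σ true (Γ.comma (.leaf A)) → CDer σ true ((Struct.leaf A.dual).comma Δ) →
      CDer σ true (Γ.comma Δ)

end NACLL

namespace NACLL

theorem CForm.dual_dual {I : Type} (A : CForm I) : A.dual.dual = A := by
  induction A <;> simp_all only [CForm.dual]

theorem fillAll_of_forall_fill {F : Type} {X Y : Struct F} {P : Struct F → Prop}
    (replace : ∀ R : Ctx F, P (R.fill X) → P (R.fill Y)) (Δ : Struct (Option F))
    (hX : P (fillAll Δ X)) : P (fillAll Δ Y) := by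
  -- Generalizing `P` lets it absorb the sibling of the subtree being rewritten, so that
  -- contexts never have to be composed.
  induction Δ generalizing P with
  | emp => exact hX
  | leaf o =>
    cases o with
    | none => exact replace .hole hX
    | some a => exact hX
  | pair l r ihl ihr =>
    have left_replaced : P ((fillAll l Y).comma (fillAll r X)) :=
      ihl (P := fun Z => P (Z.comma (fillAll r X))) (fun R => replace (.pairL R _)) hX
    exact ihr (P := fun Z => P ((fillAll l Y).comma Z)) (fun R => replace (.pairR _ R))
      left_replaced

theorem CDer.contract_fillAll {I : Type} {σ : Sig I} {b : Bool} {Θ : Struct (CForm I)}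
    (hΘ : QAll σ .C Θ) (S : Ctx (CForm I)) (Δ : Struct (Option (CForm I)))
    (h : CDer σ b ((S.fill Θ).comma (fillAll Δ Θ))) :
    CDer σ b ((S.fill Θ).comma (fillAll Δ .emp)) :=
  fillAll_of_forall_fill (P := fun Z => CDer σ b ((S.fill Θ).comma Z))
    (fun R => CDer.qC (.splitRL S R) hΘ) Δ h

/-- **Admissibility of the mix rule in CacLL with cut.**  If `C ∈ f(c)`, then
from `⊢ (Γ, !ᶜ A⊥)` and `⊢ (?ᶜ A, Δ{?ᶜ A}⋯{?ᶜ A})` one may infer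
`⊢ (Γ, Δ{}⋯{})` in CacLL with cut (each application of mix amounts to one cut
followed by possibly several contractions `?C`). -/
theorem mix_admissible {I : Type} (σ : Sig I) (c : I) (hc : SubAx.C ∈ σ.f c)
    (A : CForm I) (Γ : Struct (CForm I)) (Δ : Struct (Option (CForm I)))
    (h1 : CDer σ true (Γ.comma (.leaf (.bang c A.dual))))
    (h2 : CDer σ true ((Struct.leaf (.quest c A)).comma
            (fillAll Δ (.leaf (.quest c A))))) :
    CDer σ true (Γ.comma (fillAll Δ .emp)) := by
  have contracted : CDer σ true ((Struct.leaf (.quest c A)).comma (fillAll Δ .emp)) :=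
    CDer.contract_fillAll (QAll.leaf hc) .hole Δ h2
  have dual_bang : (CForm.bang c A.dual).dual = .quest c A :=
    congrArg (CForm.quest c) A.dual_dual
  exact CDer.cut h1 (dual_bang ▸ contracted)

end NACLL
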